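/- In the multinomial assignment setting, write p_n = n^{-2} and suppose m(n)·p_n = c·n^{-a}·(1+o(1)) for constants c > 0 and a ∈ (0,1) with a < 1/k for a positive integer k. Then for every δ ∈ (0,1), E[max_{1≤j≤⌊δn⌋} X_{1j}] ≥ k·(1+o(1)); that is, liminf_{n→∞} E[max_{1≤j≤⌊δn⌋} X_{1j}] ≥ k. -/

import Mathlib

open MeasureTheory Filter Real

noncomputable section

/-- The uniform measure on the `n × n` grid of cells. -/
def cellMeasure (n : ℕ) : Measure (Fin n × Fin n) :=
  ((n : ENNReal) ^ 2)⁻¹ • Measure.count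

/-- The law of `m` i.i.d. points, each uniformly distributed on the `n × n` grid;
under this measure the matrix of cell counts is multinomial `M(m, n²)`. -/
def gridMeasure (m n : ℕ) : Measure (Fin m → Fin n × Fin n) :=
  Measure.pi fun _ => cellMeasure n

/-- `X_{ij}`: the number of the `m` points falling in cell `(i, j)`. -/
def cellCount {m n : ℕ} (i j : Fin n) (ω : Fin m → Fin n × Fin n) : ℕ :=
  (Finset.univ.filter fun k => ω k = (i, j)).card

/-- The assignment sum `S(σ) = ∑ i, X_{i σ(i)}`. -/
def assignSum {m n : ℕ} (σ : Equiv.Perm (Fin n)) (ω : Fin m → Fin n × Fin n) : ℝ :=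
  ∑ i, (cellCount i (σ i) ω : ℝ)

/-- `max_{σ ∈ S_n} S(σ)`. -/
def maxAssign {m n : ℕ} (ω : Fin m → Fin n × Fin n) : ℝ :=
  ⨆ σ : Equiv.Perm (Fin n), assignSum σ ω

/-- `min_{σ ∈ S_n} S(σ)`. -/
def minAssign {m n : ℕ} (ω : Fin m → Fin n × Fin n) : ℝ :=
  ⨅ σ : Equiv.Perm (Fin n), assignSum σ ω

/-- `E[max_{σ ∈ S_n} S(σ)]`. -/
def EmaxAssign (m n : ℕ) : ℝ :=
  ∫ ω, maxAssign ω ∂(gridMeasure m n)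

/-- `E[min_{σ ∈ S_n} S(σ)]`. -/
def EminAssign (m n : ℕ) : ℝ :=
  ∫ ω, minAssign ω ∂(gridMeasure m n)

/-- The first row of the multinomial matrix: `X_{1j}` is the number of points in cell `(1, j)`
(indexing rows by `Fin n`, the first row is index `0`). -/
def firstRowCount {m n : ℕ} (j : Fin n) (ω : Fin m → Fin n × Fin n) : ℕ :=
  (Finset.univ.filter fun k => ((ω k).1 : ℕ) = 0 ∧ (ω k).2 = j).card

/-- Indicator of the cell `(1, j)`. -/
def cellInd {n : ℕ} (j : Fin n) (x : Fin n × Fin n) : ℝ :=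
  if (x.1 : ℕ) = 0 ∧ x.2 = j then 1 else 0

lemma cellMeasure_prob (n : ℕ) (hn : 0 < n) : IsProbabilityMeasure (cellMeasure n) := by
  constructor
  have h0 : ((n : ENNReal) ^ 2) ≠ 0 := by
    have : (n : ENNReal) ≠ 0 := by exact_mod_cast hn.ne'
    exact pow_ne_zero _ this
  have h1 : ((n : ENNReal) ^ 2) ≠ ⊤ := ENNReal.pow_ne_top (ENNReal.natCast_ne_top n)
  have : (Measure.count (Set.univ : Set (Fin n × Fin n))) = (n : ENNReal) ^ 2 := by
    rw [Measure.count_univ]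
    simp [sq]
  rw [cellMeasure, Measure.smul_apply, this, smul_eq_mul, ENNReal.inv_mul_cancel h0 h1]

lemma gridMeasure_prob (m n : ℕ) (hn : 0 < n) : IsProbabilityMeasure (gridMeasure m n) := by
  have := cellMeasure_prob n hn
  unfold gridMeasure
  infer_instance

lemma integral_cellInd {n : ℕ} (j : Fin n) :
    ∫ x, cellInd j x ∂(cellMeasure n) = 1 / (n : ℝ) ^ 2 := by
  have hn : 0 < n := j.pos
  have : ∑ x : Fin n × Fin n, cellInd j x = 1 := by
    rw [Finset.sum_eq_single ((⟨0, hn⟩ : Fin n), j)]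
    · simp [cellInd]
    · rintro ⟨x, y⟩ _ hne
      have : ¬ ((x : ℕ) = 0 ∧ y = j) := by
        rintro ⟨h1, h2⟩
        exact hne (by rw [h2]; congr 1; exact Fin.ext h1)
      simp [cellInd, this]
    · simp
  rw [cellMeasure, integral_smul_measure, integral_count, this]
  simp

lemma integral_grid_prod {m n : ℕ} (hn : 0 < n) (F : Fin m → Fin n × Fin n → ℝ) :
    ∫ ω, ∏ i, F i (ω i) ∂(gridMeasure m n) = ∏ i, ∫ x, F i x ∂(cellMeasure n) := by
  have := cellMeasure_prob n hn
  exact integral_fintype_prod_eq_prod F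

lemma prod_ite_cellInd {m n : ℕ} (j : Fin n) (S : Finset (Fin m)) (ω : Fin m → Fin n × Fin n) :
    ∏ i, (if i ∈ S then cellInd j (ω i) else 1) =
      if S ⊆ Finset.univ.filter (fun k => ((ω k).1 : ℕ) = 0 ∧ (ω k).2 = j) then 1 else 0 := by
  rw [Finset.prod_ite_mem, Finset.univ_inter]
  unfold cellInd
  rw [Finset.prod_ite_zero]
  simp [Finset.subset_iff]

lemma choose_count_eq {m n : ℕ} (j : Fin n) (k : ℕ) (ω : Fin m → Fin n × Fin n) :
    ((firstRowCount j ω).choose k : ℝ) =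
      ∑ S ∈ Finset.powersetCard k (Finset.univ : Finset (Fin m)),
        ∏ i, (if i ∈ S then cellInd j (ω i) else 1) := by
  simp_rw [prod_ite_cellInd]
  rw [firstRowCount, ← Finset.card_powersetCard, Finset.sum_boole]
  congr 2
  ext S
  simp only [Finset.mem_powersetCard, Finset.mem_filter, Finset.subset_univ, true_and]
  tauto

lemma two_pow_count_eq {m n : ℕ} (j : Fin n) (ω : Fin m → Fin n × Fin n) :
    ((2 : ℝ) ^ (firstRowCount j ω)) = ∏ i, (1 + cellInd j (ω i)) := by
  have : ∀ i, (1 + cellInd j (ω i)) =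
      if ((ω i).1 : ℕ) = 0 ∧ (ω i).2 = j then (2 : ℝ) else 1 := by
    intro i
    unfold cellInd
    split_ifs <;> norm_num
  simp_rw [this]
  rw [← Finset.prod_filter, Finset.prod_const, firstRowCount]

lemma prod_ite_const {m : ℕ} (S : Finset (Fin m)) (p : ℝ) :
    ∏ i, (if i ∈ S then p else 1) = p ^ S.card := by
  rw [Finset.prod_ite_mem, Finset.univ_inter, Finset.prod_const]

lemma grid_integrable {m n : ℕ} (hn : 0 < n) (f : (Fin m → Fin n × Fin n) → ℝ) :
    Integrable f (gridMeasure m n) := by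
  have := gridMeasure_prob m n hn
  exact Integrable.of_finite

lemma cell_integrable {n : ℕ} (hn : 0 < n) (f : Fin n × Fin n → ℝ) :
    Integrable f (cellMeasure n) := by
  have := cellMeasure_prob n hn
  exact Integrable.of_finite

lemma E_choose {m n : ℕ} (j : Fin n) (k : ℕ) :
    ∫ ω, ((firstRowCount j ω).choose k : ℝ) ∂(gridMeasure m n) =
      (m.choose k : ℝ) * (1 / (n : ℝ) ^ 2) ^ k := by
  have hn : 0 < n := j.pos
  have := cellMeasure_prob n hn
  simp_rw [choose_count_eq]
  rw [integral_finsetSum _ (fun S _ => grid_integrable hn _)]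
  have : ∀ S ∈ Finset.powersetCard k (Finset.univ : Finset (Fin m)),
      ∫ ω, ∏ i, (if i ∈ S then cellInd j (ω i) else 1) ∂(gridMeasure m n) =
        (1 / (n : ℝ) ^ 2) ^ k := by
    intro S hS
    rw [integral_grid_prod hn (fun i x => if i ∈ S then cellInd j x else 1)]
    rw [← (Finset.mem_powersetCard.1 hS).2, ← prod_ite_const]
    refine Finset.prod_congr rfl fun i _ => ?_
    split_ifs
    · exact integral_cellInd j
    · simp
  rw [Finset.sum_congr rfl this]
  simp [Finset.card_powersetCard]

lemma E_choose_mul {m n : ℕ} (j l : Fin n) (hjl : j ≠ l) (k : ℕ) :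
    ∫ ω, ((firstRowCount j ω).choose k : ℝ) * ((firstRowCount l ω).choose k : ℝ)
        ∂(gridMeasure m n) ≤
      ((m.choose k : ℝ) * (1 / (n : ℝ) ^ 2) ^ k) ^ 2 := by
  have hn : 0 < n := j.pos
  have := cellMeasure_prob n hn
  simp_rw [choose_count_eq, Finset.sum_mul_sum, ← Finset.prod_mul_distrib]
  rw [integral_finsetSum _ (fun S _ => grid_integrable hn _)]
  have : ∀ S ∈ Finset.powersetCard k (Finset.univ : Finset (Fin m)),
      ∀ T ∈ Finset.powersetCard k (Finset.univ : Finset (Fin m)),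
      ∫ ω, ∏ i, ((if i ∈ S then cellInd j (ω i) else 1) *
        (if i ∈ T then cellInd l (ω i) else 1)) ∂(gridMeasure m n) ≤
        (1 / (n : ℝ) ^ 2) ^ k * (1 / (n : ℝ) ^ 2) ^ k := by
    intro S hS T hT
    rw [integral_grid_prod hn (fun i x => (if i ∈ S then cellInd j x else 1) *
        (if i ∈ T then cellInd l x else 1))]
    nth_rewrite 2 [← (Finset.mem_powersetCard.1 hT).2]
    rw [← (Finset.mem_powersetCard.1 hS).2, ← prod_ite_const, ← prod_ite_const,
      ← Finset.prod_mul_distrib]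
    refine Finset.prod_le_prod (fun i _ => ?_) fun i _ => ?_
    · refine integral_nonneg fun x => ?_
      unfold cellInd
      positivity
    · split_ifs
      · have : ∀ x, cellInd j x * cellInd l x = 0 := by
          intro x
          unfold cellInd
          split_ifs with h1 h2
          · exact absurd (h1.2.symm.trans h2.2) hjl
          all_goals simp
        simp only [this, integral_zero]
        positivity
      · simp only [mul_one]; exact (integral_cellInd j).le
      · simp only [one_mul]; exact (integral_cellInd l).le
      · simp
  calc _ ≤ ∑ S ∈ Finset.powersetCard k (Finset.univ : Finset (Fin m)),
      ∑ T ∈ Finset.powersetCard k (Finset.univ : Finset (Fin m)),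
        (1 / (n : ℝ) ^ 2) ^ k * (1 / (n : ℝ) ^ 2) ^ k := by
        refine Finset.sum_le_sum fun S hS => ?_
        rw [integral_finsetSum _ (fun S _ => grid_integrable hn _)]
        exact Finset.sum_le_sum fun T hT => this S hS T hT
    _ = _ := by
        simp only [Finset.sum_const, Finset.card_powersetCard, Finset.card_univ,
          Fintype.card_fin, nsmul_eq_mul]
        ring

lemma E_choose_sq {m n : ℕ} (j : Fin n) (k : ℕ) :
    ∫ ω, ((firstRowCount j ω).choose k : ℝ) * ((firstRowCount j ω).choose k : ℝ)
        ∂(gridMeasure m n) ≤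
      (m.choose k : ℝ) * (1 / (n : ℝ) ^ 2) ^ k * (2 ^ k * Real.exp ((m : ℝ) / (n : ℝ) ^ 2)) := by
  have hn : 0 < n := j.pos
  have := cellMeasure_prob n hn
  have hle : ∫ ω, ((firstRowCount j ω).choose k : ℝ) * ((firstRowCount j ω).choose k : ℝ)
        ∂(gridMeasure m n) ≤
      ∫ ω, ((firstRowCount j ω).choose k : ℝ) * (2 : ℝ) ^ (firstRowCount j ω)
        ∂(gridMeasure m n) := by
    refine integral_mono (grid_integrable hn _) (grid_integrable hn _) fun ω => ?_
    have : ((firstRowCount j ω).choose k : ℝ) ≤ (2 : ℝ) ^ (firstRowCount j ω) := by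
      exact_mod_cast Nat.choose_le_two_pow _ _
    exact mul_le_mul_of_nonneg_left this (by positivity)
  refine hle.trans ?_
  simp_rw [choose_count_eq, two_pow_count_eq, Finset.sum_mul, ← Finset.prod_mul_distrib]
  rw [integral_finsetSum _ (fun S _ => grid_integrable hn _)]
  set p : ℝ := 1 / (n : ℝ) ^ 2 with hp
  have hp0 : 0 ≤ p := by positivity
  have : ∀ S ∈ Finset.powersetCard k (Finset.univ : Finset (Fin m)),
      ∫ ω, ∏ i, ((if i ∈ S then cellInd j (ω i) else 1) *
        (1 + cellInd j (ω i))) ∂(gridMeasure m n) ≤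
        (2 * p) ^ k * Real.exp ((m : ℝ) / (n : ℝ) ^ 2) := by
    intro S hS
    rw [integral_grid_prod hn (fun i x => (if i ∈ S then cellInd j x else 1) *
        (1 + cellInd j x))]
    have he : Real.exp ((m : ℝ) / (n : ℝ) ^ 2) = ∏ i : Fin m, Real.exp p := by
      rw [Finset.prod_const, ← Real.exp_nat_mul]
      simp [hp, div_eq_mul_inv]
    rw [he, ← (Finset.mem_powersetCard.1 hS).2, ← prod_ite_const, ← Finset.prod_mul_distrib]
    have h1e : 1 + p ≤ Real.exp p := by linarith [Real.add_one_le_exp p]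
    refine Finset.prod_le_prod (fun i _ => ?_) fun i _ => ?_
    · refine integral_nonneg fun x => ?_
      unfold cellInd
      positivity
    · split_ifs
      · have : ∀ x, cellInd j x * (1 + cellInd j x) = 2 * cellInd j x := by
          intro x
          unfold cellInd
          split_ifs <;> norm_num
        simp only [this]
        rw [integral_const_mul, integral_cellInd, ← hp]
        nlinarith
      · simp only [one_mul]
        rw [integral_add (cell_integrable hn _) (cell_integrable hn _), integral_cellInd]
        rw [← hp]
        simpa only [integral_const, probReal_univ, one_smul] using h1e
  calc _ ≤ ∑ S ∈ Finset.powersetCard k (Finset.univ : Finset (Fin m)),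
        (2 * p) ^ k * Real.exp ((m : ℝ) / (n : ℝ) ^ 2) := Finset.sum_le_sum this
    _ = _ := by
        simp only [Finset.sum_const, Finset.card_powersetCard, Finset.card_univ,
          Fintype.card_fin, nsmul_eq_mul]
        ring

lemma rowmax_lower {m n : ℕ} (hn : 0 < n) (J : Finset (Fin n)) (k : ℕ) (hk : 0 < k) (μ : ℝ)
    (hμ : μ = J.card * ((m.choose k : ℝ) * (1 / (n : ℝ) ^ 2) ^ k)) (hμ0 : 0 < μ) :
    (k : ℝ) * (1 - (2 ^ k * Real.exp ((m : ℝ) / (n : ℝ) ^ 2)) / μ) ≤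
      ∫ ω, ((J.sup fun j => firstRowCount j ω : ℕ) : ℝ) ∂(gridMeasure m n) := by
  have := gridMeasure_prob m n hn
  set q : ℝ := (m.choose k : ℝ) * (1 / (n : ℝ) ^ 2) ^ k with hq
  have hq0 : 0 ≤ q := by positivity
  set B : ℝ := 2 ^ k * Real.exp ((m : ℝ) / (n : ℝ) ^ 2) with hB
  have hB0 : 0 ≤ B := by positivity
  let Y : (Fin m → Fin n × Fin n) → ℝ := fun ω => ∑ j ∈ J, ((firstRowCount j ω).choose k : ℝ)
  have hY1 : ∫ ω, Y ω ∂(gridMeasure m n) = μ := by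
    simp only [Y]
    rw [integral_finsetSum _ (fun S _ => grid_integrable hn _)]
    simp_rw [E_choose]
    rw [hμ]; simp [hq]
  have hY2 : ∫ ω, Y ω * Y ω ∂(gridMeasure m n) ≤ μ ^ 2 + μ * B := by
    simp only [Y, Finset.sum_mul_sum]
    rw [integral_finsetSum _ (fun S _ => grid_integrable hn _)]
    calc _ ≤ ∑ j ∈ J, ∑ l ∈ J, (q ^ 2 + if j = l then q * B else 0) := by
          refine Finset.sum_le_sum fun j _ => ?_
          rw [integral_finsetSum _ (fun S _ => grid_integrable hn _)]
          refine Finset.sum_le_sum fun l _ => ?_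
          split_ifs with h
          · subst h
            have := E_choose_sq (m := m) j k
            rw [← hq, ← hB] at this
            nlinarith [sq_nonneg q]
          · have := E_choose_mul (m := m) j l h k
            rw [← hq] at this
            simpa only [add_zero] using this
      _ = _ := by
          simp only [Finset.sum_add_distrib, Finset.sum_const, Finset.sum_ite_eq, nsmul_eq_mul]
          rw [Finset.sum_ite_mem, Finset.inter_self, Finset.sum_const, nsmul_eq_mul, hμ]
          ring
  have hpt : ∀ ω, (k : ℝ) * (2 / μ * Y ω - 1 / μ ^ 2 * (Y ω * Y ω)) ≤
      ((J.sup fun j => firstRowCount j ω : ℕ) : ℝ) := by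
    intro ω
    by_cases h : ∃ j ∈ J, k ≤ firstRowCount j ω
    · obtain ⟨j, hj, hkj⟩ := h
      have h1 : k ≤ J.sup fun j => firstRowCount j ω :=
        hkj.trans (Finset.le_sup (f := fun j => firstRowCount j ω) hj)
      have h1' : (k : ℝ) ≤ ((J.sup fun j => firstRowCount j ω : ℕ) : ℝ) := by exact_mod_cast h1
      refine le_trans ?_ h1'
      have h2 : 2 / μ * Y ω - 1 / μ ^ 2 * (Y ω * Y ω) = 1 - (1 - Y ω / μ) ^ 2 := by
        field_simp; ring
      have h3 : 2 / μ * Y ω - 1 / μ ^ 2 * (Y ω * Y ω) ≤ 1 := by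
        rw [h2]; nlinarith [sq_nonneg (1 - Y ω / μ)]
      exact mul_le_of_le_one_right (by positivity) h3
    · push Not at h
      have : Y ω = 0 := Finset.sum_eq_zero fun j hj => by
        rw [Nat.choose_eq_zero_of_lt (h j hj)]; simp
      rw [this]; simp
  have hint := integral_mono (grid_integrable hn _) (grid_integrable hn _) hpt
  refine le_trans ?_ hint
  rw [integral_const_mul, integral_sub (grid_integrable hn _) (grid_integrable hn _),
    integral_const_mul, integral_const_mul, hY1]
  refine mul_le_mul_of_nonneg_left ?_ (by positivity)
  have h4 : 1 / μ ^ 2 * ∫ ω, Y ω * Y ω ∂(gridMeasure m n) ≤ 1 / μ ^ 2 * (μ ^ 2 + μ * B) :=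
    mul_le_mul_of_nonneg_left hY2 (by positivity)
  have h5 : 1 / μ ^ 2 * (μ ^ 2 + μ * B) = 1 + B / μ := by field_simp
  have h6 : 2 / μ * μ = 2 := by field_simp
  linarith

lemma le_add_choose (x K : ℕ) : x ≤ K + x.choose (K + 1) := by
  induction x with
  | zero => simp
  | succ x ih =>
    rcases Nat.lt_or_ge x K with h | h
    · omega
    · rw [Nat.choose_succ_succ']
      have := Nat.choose_pos h
      omega

lemma rowmax_upper {m n : ℕ} (hn : 0 < n) (J : Finset (Fin n)) (K : ℕ) :
    ∫ ω, ((J.sup fun j => firstRowCount j ω : ℕ) : ℝ) ∂(gridMeasure m n) ≤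
      K + n * ((m : ℝ) / (n : ℝ) ^ 2) ^ (K + 1) := by
  have := gridMeasure_prob m n hn
  have hpt : ∀ ω, ((J.sup fun j => firstRowCount j ω : ℕ) : ℝ) ≤
      K + ∑ j : Fin n, ((firstRowCount (m := m) j ω).choose (K + 1) : ℝ) := by
    intro ω
    have : (J.sup fun j => firstRowCount j ω) ≤
        K + ∑ j : Fin n, (firstRowCount (m := m) j ω).choose (K + 1) := by
      refine Finset.sup_le fun j _ => (le_add_choose _ K).trans ?_
      gcongr
      exact Finset.single_le_sum
        (f := fun j => (firstRowCount (m := m) j ω).choose (K + 1)) (by simp) (Finset.mem_univ j)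
    exact_mod_cast this
  refine (integral_mono (grid_integrable hn _) (grid_integrable hn _) hpt).trans ?_
  rw [integral_add (grid_integrable hn _) (grid_integrable hn _),
    integral_finsetSum _ (fun S _ => grid_integrable hn _)]
  simp_rw [E_choose]
  simp only [integral_const, probReal_univ, one_smul, Finset.sum_const, Finset.card_univ,
    Fintype.card_fin, nsmul_eq_mul]
  have : (m.choose (K + 1) : ℝ) ≤ (m : ℝ) ^ (K + 1) := by exact_mod_cast Nat.choose_le_pow _ _
  rw [div_eq_mul_one_div (m : ℝ), mul_pow (m : ℝ)]
  gcongr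

/-- **Rather sparse matrices, lower bound for partial row maxima.**
If `m(n) p_n = c n^{-a} (1 + o(1))` with `c > 0`, `0 < a < 1`, `a < 1/k` for a positive
integer `k`, then for every `δ ∈ (0,1)`,
`E[max_{1 ≤ j ≤ ⌊δ n⌋} X_{1j}] ≥ k (1 + o(1))`. -/
theorem expected_rowmax_ratherSparse_lower (m : ℕ → ℕ) (hm : ∀ n, 0 < m n) (c a : ℝ)
    (hc : 0 < c) (ha0 : 0 < a) (ha1 : a < 1) (k : ℕ) (hk : 0 < k) (hak : a < 1 / (k : ℝ))
    (hmp : Tendsto (fun n : ℕ => ((m n : ℝ) / (n : ℝ) ^ 2) / (c * (n : ℝ) ^ (-a)))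
      atTop (nhds 1))
    (δ : ℝ) (hδ0 : 0 < δ) (hδ1 : δ < 1) :
    (k : ℝ) ≤
      Filter.liminf
        (fun n : ℕ =>
          ∫ ω, (((Finset.univ.filter fun j : Fin n => (j : ℕ) < ⌊δ * (n : ℝ)⌋₊).sup
            fun j => firstRowCount j ω : ℕ) : ℝ) ∂(gridMeasure (m n) n))
        atTop := by
  have hr1 : ∀ᶠ n : ℕ in atTop,
      1 / 2 ≤ ((m n : ℝ) / (n : ℝ) ^ 2) / (c * (n : ℝ) ^ (-a)) :=
    hmp.eventually_const_le (by norm_num)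
  have hr2 : ∀ᶠ n : ℕ in atTop,
      ((m n : ℝ) / (n : ℝ) ^ 2) / (c * (n : ℝ) ^ (-a)) ≤ 2 :=
    hmp.eventually_le_const (by norm_num)
  have hlam1 : ∀ᶠ n : ℕ in atTop, c / 2 * (n : ℝ) ^ (-a) ≤ (m n : ℝ) / (n : ℝ) ^ 2 := by
    filter_upwards [hr1, eventually_gt_atTop 0] with n h hn
    have hn' : (0 : ℝ) < n := by exact_mod_cast hn
    rw [le_div_iff₀ (by positivity)] at h
    linarith
  have hlam2 : ∀ᶠ n : ℕ in atTop, (m n : ℝ) / (n : ℝ) ^ 2 ≤ 2 * c * (n : ℝ) ^ (-a) := by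
    filter_upwards [hr2, eventually_gt_atTop 0] with n h hn
    have hn' : (0 : ℝ) < n := by exact_mod_cast hn
    rw [div_le_iff₀ (by positivity)] at h
    linarith
  -- upper bound
  have hupper : ∃ b : ℝ, ∀ᶠ n : ℕ in atTop,
      ∫ ω, (((Finset.univ.filter fun j : Fin n => (j : ℕ) < ⌊δ * (n : ℝ)⌋₊).sup
            fun j => firstRowCount j ω : ℕ) : ℝ) ∂(gridMeasure (m n) n) ≤ b := by
    set K : ℕ := ⌈1 / a⌉₊ with hK
    refine ⟨K + (2 * c) ^ (K + 1), ?_⟩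
    filter_upwards [hlam2, eventually_gt_atTop 0] with n h hn
    have hn' : (1 : ℝ) ≤ n := by exact_mod_cast hn
    have hn0 : (0 : ℝ) < n := by linarith
    refine (rowmax_upper hn _ K).trans ?_
    gcongr
    have hKa : 1 ≤ a * ((K + 1 : ℕ) : ℝ) := by
      have h1 : 1 / a ≤ (K : ℝ) := Nat.le_ceil _
      rw [div_le_iff₀ ha0] at h1
      push_cast
      nlinarith
    have h2 : ((n : ℝ) ^ (-a)) ^ (K + 1) ≤ (n : ℝ)⁻¹ := by
      rw [← Real.rpow_mul_natCast hn0.le, ← Real.rpow_neg_one]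
      exact Real.rpow_le_rpow_of_exponent_le hn' (by linarith)
    calc (n : ℝ) * ((m n : ℝ) / (n : ℝ) ^ 2) ^ (K + 1)
        ≤ n * (2 * c * (n : ℝ) ^ (-a)) ^ (K + 1) := by gcongr
      _ = n * ((2 * c) ^ (K + 1) * ((n : ℝ) ^ (-a)) ^ (K + 1)) := by rw [mul_pow (2 * c)]
      _ ≤ n * ((2 * c) ^ (K + 1) * (n : ℝ)⁻¹) := by gcongr
      _ = (2 * c) ^ (K + 1) := by field_simp
  obtain ⟨b, hb⟩ := hupper
  have hcob : IsCoboundedUnder (· ≥ ·) atTop (fun n : ℕ =>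
      ∫ ω, (((Finset.univ.filter fun j : Fin n => (j : ℕ) < ⌊δ * (n : ℝ)⌋₊).sup
            fun j => firstRowCount j ω : ℕ) : ℝ) ∂(gridMeasure (m n) n)) :=
    IsBoundedUnder.isCoboundedUnder_ge ⟨b, by simpa using hb⟩
  -- lower bound
  set D : ℝ := δ / 2 * ((c / 4) ^ k / (k.factorial : ℝ)) with hD
  have hD0 : 0 < D := by positivity
  set B : ℝ := 2 ^ k * Real.exp (2 * c) with hB
  have hexp : 0 < 1 - a * k := by
    have hk' : (0 : ℝ) < k := by exact_mod_cast hk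
    rw [lt_div_iff₀ hk'] at hak
    linarith
  have hlow : ∀ᶠ n : ℕ in atTop, (k : ℝ) * (1 - B / (D * (n : ℝ) ^ (1 - a * k))) ≤
      ∫ ω, (((Finset.univ.filter fun j : Fin n => (j : ℕ) < ⌊δ * (n : ℝ)⌋₊).sup
            fun j => firstRowCount j ω : ℕ) : ℝ) ∂(gridMeasure (m n) n) := by
    filter_upwards [hlam1, hlam2, eventually_gt_atTop 0,
      eventually_ge_atTop ⌈4 * k / c⌉₊, eventually_ge_atTop ⌈2 / δ⌉₊] with n h1 h2 hn hn1 hn2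
    have hn' : (1 : ℝ) ≤ n := by exact_mod_cast hn
    have hn0 : (0 : ℝ) < n := by linarith
    have hn1' : 4 * k / c ≤ (n : ℝ) := (Nat.ceil_le.1 hn1)
    have hn2' : 2 / δ ≤ (n : ℝ) := (Nat.ceil_le.1 hn2)
    rw [div_le_iff₀ hc] at hn1'
    rw [div_le_iff₀ hδ0] at hn2'
    have hx1 : (n : ℝ) ^ (-a) ≤ 1 := Real.rpow_le_one_of_one_le_of_nonpos hn' (by linarith)
    have hx2 : (n : ℝ)⁻¹ ≤ (n : ℝ) ^ (-a) := by
      rw [← Real.rpow_neg_one]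
      exact Real.rpow_le_rpow_of_exponent_le hn' (by linarith)
    have hmk : 2 * k ≤ m n := by
      have h3 : c / 2 * (n : ℝ)⁻¹ ≤ (m n : ℝ) / (n : ℝ) ^ 2 :=
        le_trans (by gcongr) h1
      rw [le_div_iff₀ (by positivity)] at h3
      have h4 : c / 2 * (n : ℝ)⁻¹ * (n : ℝ) ^ 2 = c / 2 * n := by field_simp
      rw [h4] at h3
      have : (2 * k : ℝ) ≤ m n := by linarith
      exact_mod_cast this
    have hcard : (Finset.univ.filter fun j : Fin n => (j : ℕ) < ⌊δ * (n : ℝ)⌋₊).card =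
        ⌊δ * (n : ℝ)⌋₊ := by
      rw [Fin.card_filter_val_lt]
      refine min_eq_right ?_
      refine Nat.floor_le_of_le ?_
      nlinarith
    have hN : δ / 2 * n ≤ (⌊δ * (n : ℝ)⌋₊ : ℝ) := by
      have := Nat.lt_floor_add_one (δ * (n : ℝ))
      nlinarith
    set μ : ℝ := (Finset.univ.filter fun j : Fin n => (j : ℕ) < ⌊δ * (n : ℝ)⌋₊).card *
      (((m n).choose k : ℝ) * (1 / (n : ℝ) ^ 2) ^ k) with hμ
    have hch : ((m n : ℝ) / 2) ^ k / (k.factorial : ℝ) ≤ ((m n).choose k : ℝ) := by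
      refine le_trans ?_ (Nat.pow_le_choose k (m n))
      gcongr
      rw [Nat.cast_sub (by omega)]
      have : (2 * k : ℝ) ≤ m n := by exact_mod_cast hmk
      push_cast
      linarith
    have hμD : D * (n : ℝ) ^ (1 - a * k) ≤ μ := by
      have h5 : (n : ℝ) ^ (1 - a * k) = n * ((n : ℝ) ^ (-a)) ^ k := by
        rw [← Real.rpow_mul_natCast hn0.le, sub_eq_add_neg, Real.rpow_add hn0, Real.rpow_one,
          neg_mul]
      calc D * (n : ℝ) ^ (1 - a * k)
          = δ / 2 * n * ((c / 2 * (n : ℝ) ^ (-a)) ^ k * (1 / 2) ^ k / (k.factorial : ℝ)) := by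
            rw [h5, hD, ← mul_pow, show c / 2 * (n : ℝ) ^ (-a) * (1 / 2) =
              c / 4 * (n : ℝ) ^ (-a) by ring, mul_pow]
            ring
        _ ≤ δ / 2 * n * (((m n : ℝ) / (n : ℝ) ^ 2) ^ k * (1 / 2) ^ k / (k.factorial : ℝ)) := by
            gcongr
        _ = δ / 2 * n * (((m n : ℝ) / 2) ^ k / (k.factorial : ℝ) * (1 / (n : ℝ) ^ 2) ^ k) := by
            rw [div_mul_eq_mul_div (((m n : ℝ) / 2) ^ k), ← mul_pow, ← mul_pow,
              show (m n : ℝ) / (n : ℝ) ^ 2 * (1 / 2) = (m n : ℝ) / 2 * (1 / (n : ℝ) ^ 2) by ring]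
        _ ≤ μ := by
            rw [hμ, hcard]
            gcongr
    have hDn : 0 < D * (n : ℝ) ^ (1 - a * k) := by positivity
    refine le_trans ?_ (rowmax_lower hn _ k hk μ hμ (hDn.trans_le hμD))
    have hl2 : (m n : ℝ) / (n : ℝ) ^ 2 ≤ 2 * c := by nlinarith
    gcongr
    rw [hB]
    gcongr
  have hlim : Tendsto (fun n : ℕ => (k : ℝ) * (1 - B / (D * (n : ℝ) ^ (1 - a * k))))
      atTop (nhds k) := by
    have h1 : Tendsto (fun n : ℕ => D * (n : ℝ) ^ (1 - a * k)) atTop atTop :=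
      Tendsto.const_mul_atTop hD0
        ((tendsto_rpow_atTop hexp).comp tendsto_natCast_atTop_atTop)
    have h2 : Tendsto (fun n : ℕ => B / (D * (n : ℝ) ^ (1 - a * k))) atTop (nhds 0) :=
      h1.const_div_atTop B
    simpa using (h2.const_sub 1).const_mul (k : ℝ)
  refine le_of_forall_lt fun x hx => ?_
  obtain ⟨y, hxy, hyk⟩ := exists_between hx
  refine hxy.trans_le (le_liminf_of_le hcob ?_)
  filter_upwards [hlow, hlim.eventually_const_le hyk] with n h1 h2
  exact h2.trans h1

end
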